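/- Asymptotically, diam(k) = 2 + Θ(1/k^{2/3}): there exist constants c₁, c₂ > 0 and an integer k₀ such that for all integers k ≥ k₀, 2 + c₁·k^{-2/3} ≤ diam(k) ≤ 2 + c₂·k^{-2/3}. -/

import Mathlib

open Real MeasureTheory

/-- Arc distance between points on the unit circle, given by their polar angles:
the length of the shorter arc between them. -/
noncomputable def arcDist (p q : ℝ) : ℝ := ⨅ n : ℤ, |p - q + 2 * π * n|

/-- Euclidean length of the chord between the circle points with angles `u` and `v`. -/
noncomputable def chordLen (u v : ℝ) : ℝ := 2 * Real.sin (arcDist u v / 2)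

/-- A pair of angles is a genuine shortcut (chord) if its endpoints are distinct points. -/
def IsShortcut (s : ℝ × ℝ) : Prop := arcDist s.1 s.2 ≠ 0

/-- δ(a) = arcsin(a/2) - a/2. -/
noncomputable def sdelta (a : ℝ) : ℝ := Real.arcsin (a / 2) - a / 2

/-- Cost of a path that starts at `p`, fully traverses the listed chords in order
(travelling along the circle in between), and ends at `q`. -/
noncomputable def walkCost (q : ℝ) : ℝ → List (ℝ × ℝ) → ℝ
  | p, [] => arcDist p q
  | p, e :: L => arcDist p e.1 + chordLen e.1 e.2 + walkCost q e.2 L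

/-- Shortest-path distance from `p` to `q` using the shortcuts of `S`
(each usable in either orientation, and always traversed completely). -/
noncomputable def dS (S : Finset (ℝ × ℝ)) (p q : ℝ) : ℝ :=
  sInf {c | ∃ L : List (ℝ × ℝ), (∀ e ∈ L, e ∈ S ∨ (e.2, e.1) ∈ S) ∧ c = walkCost q p L}

/-- Diameter of the circle augmented with the shortcuts of `S`. -/
noncomputable def diamS (S : Finset (ℝ × ℝ)) : ℝ :=
  sSup {d | ∃ p q : ℝ, d = dS S p q}

/-- diam(k): the optimal diameter achievable with `k` shortcuts. -/
noncomputable def diamK (k : ℕ) : ℝ :=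
  sInf {d | ∃ S : Finset (ℝ × ℝ), S.card = k ∧ (∀ s ∈ S, IsShortcut s) ∧ d = diamS S}

/-- Distance from `p` to `q` when a single shortcut with endpoints `u`, `v` is available. -/
noncomputable def dOne (u v p q : ℝ) : ℝ :=
  min (arcDist p q)
    (min (arcDist p u + chordLen u v + arcDist v q)
      (arcDist p v + chordLen u v + arcDist u q))

/-- Two angles represent the same point of the circle. -/
def SamePoint (p q : ℝ) : Prop := arcDist p q = 0

/-- Two pairs of angles represent the same chord of the circle. -/
def SameChord (s t : ℝ × ℝ) : Prop :=
  (SamePoint s.1 t.1 ∧ SamePoint s.2 t.2) ∨ (SamePoint s.1 t.2 ∧ SamePoint s.2 t.1)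

/-- `p` lies in the deep umbra of the shortcut from `u` to `u + β`
(where `0 < β ≤ π` is the counterclockwise arc spanned by the shortcut):
`p` lies in the inner umbra, and `|p u'| + |s| ≥ d(p, v')` where `u'` is the
endpoint closer to `p` and `v'` the other one. -/
def InDeepUmbra (u β p : ℝ) : Prop :=
  (∃ t : ℝ, sdelta (chordLen u (u + β)) ≤ t ∧ t ≤ β - sdelta (chordLen u (u + β)) ∧
    arcDist p (u + t) = 0) ∧
  (arcDist p u ≤ arcDist p (u + β) →
    arcDist p (u + β) ≤ chordLen p u + chordLen u (u + β)) ∧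
  (arcDist p (u + β) ≤ arcDist p u →
    arcDist p u ≤ chordLen p (u + β) + chordLen u (u + β))

/-- `d` equals δ*_k : for `k ∈ {3,4,5}` this is `δ(a*_k)` where `a*_k + δ(a*_k) = (k-1)π/k`,
and for `k = 6` it is `δ(2) = π/2 - 1`. -/
def dstarSpec (k : ℕ) (d : ℝ) : Prop :=
  (k = 6 ∧ d = sdelta 2) ∨
    (∃ a, a ∈ Set.Icc (0 : ℝ) 2 ∧ a + sdelta a = ((k : ℝ) - 1) * π / k ∧ d = sdelta a)

/-!
Lower bound: if the diameter is below `2 + ε`, then for every pair of points at Euclidean distance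
at least `2 - ε` a cheap path must use a shortcut joining an `O(ε)`-neighbourhood of one point to
an `O(ε)`-neighbourhood of the other, since every vertex of the path is close to one of the two
ends and no arc can bridge the gap. Chords falling short of a diameter by an arc of at most `√ε`
have this length, and choosing both ends on a grid of spacing `36 * ε` gives about
`ε⁻¹ * ε^(-1/2)` of them, which need distinct oriented shortcuts. So `k` is at
least of order `ε^(-3/2)`.

Upper bound: a chord falling short of a diameter by an arc `x` is shorter than `2` by about `x²`.
Hence pairs of points with defect of order `2⁻ᵐ` are served by a net of chords of spacing of order
`4⁻ᵐ`, which contains about `4ᵐ * 2ᵐ = 8ᵐ` chords. Using the levels `m ≤ J` takes about `8ᴶ`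
shortcuts, and only the defects below `2⁻ᴶ` cost more than `2`, by at most `4⁻ᴶ`.
-/

/-! ### Arc and chord distance -/

theorem arcDist_le (p q : ℝ) (n : ℤ) : arcDist p q ≤ |p - q + 2 * π * n| :=
  ciInf_le (f := fun n : ℤ => |p - q + 2 * π * n|) ⟨0, by rintro _ ⟨n, rfl⟩; positivity⟩ n

theorem arcDist_eq_norm (p q : ℝ) : arcDist p q = ‖((p - q : ℝ) : AddCircle (2 * π))‖ := by
  apply le_antisymm
  · rw [AddCircle.norm_eq]
    refine (arcDist_le p q (-round ((2 * π)⁻¹ * (p - q)))).trans_eq (congrArg _ ?_)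
    push_cast
    ring
  · refine le_ciInf fun n => ?_
    have hperiod : ((p - q : ℝ) : AddCircle (2 * π)) = ((p - q + 2 * π * n : ℝ) : AddCircle _) := by
      rw [mul_comm _ (n : ℝ), ← zsmul_eq_mul, AddCircle.coe_add, AddCircle.coe_zsmul,
        AddCircle.coe_period, smul_zero, add_zero]
    rw [hperiod]
    exact QuotientAddGroup.norm_mk_le_norm

theorem arcDist_nonneg (p q : ℝ) : 0 ≤ arcDist p q := by
  rw [arcDist_eq_norm]
  positivity

theorem arcDist_le_pi (p q : ℝ) : arcDist p q ≤ π := by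
  rw [arcDist_eq_norm]
  refine (AddCircle.norm_le_half_period _ two_pi_pos.ne').trans_eq ?_
  rw [abs_of_pos two_pi_pos]
  ring

theorem exists_arcDist_eq_abs (p q : ℝ) : ∃ n : ℤ, arcDist p q = |p - q + 2 * π * n| := by
  refine ⟨-round ((2 * π)⁻¹ * (p - q)), ?_⟩
  rw [arcDist_eq_norm, AddCircle.norm_eq]
  push_cast
  ring_nf

theorem exists_abs_add_two_pi_mul_le_pi (x : ℝ) : ∃ n : ℤ, |x + 2 * π * n| ≤ π := by
  obtain ⟨n, hn⟩ := exists_arcDist_eq_abs x 0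
  refine ⟨n, ?_⟩
  rw [← sub_zero x, ← hn]
  exact arcDist_le_pi x 0

theorem chordLen_eq_two_mul_abs_sin (u v : ℝ) : chordLen u v = 2 * |sin ((u - v) / 2)| := by
  have hsin : 0 ≤ sin (arcDist u v / 2) :=
    sin_nonneg_of_nonneg_of_le_pi (by linarith [arcDist_nonneg u v])
      (by linarith [arcDist_le_pi u v, pi_pos])
  have abs_sin_abs_half (y : ℝ) : |sin (|y| / 2)| = |sin (y / 2)| := by
    rcases abs_choice y with h | h <;> simp [h, neg_div]
  obtain ⟨n, hn⟩ := exists_arcDist_eq_abs u v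
  have hshift : (u - v + 2 * π * n) / 2 = (u - v) / 2 + n * π := by ring
  rw [chordLen, ← abs_of_nonneg hsin, hn, abs_sin_abs_half, hshift, sin_add_int_mul_pi, abs_mul,
    abs_neg_one_zpow, one_mul]

theorem chordLen_eq_dist (u v : ℝ) : chordLen u v = dist (Circle.exp u) (Circle.exp v) := by
  have hfactor : Complex.exp (u * Complex.I) - Complex.exp (v * Complex.I) =
      Complex.exp (v * Complex.I) * (Complex.exp (Complex.I * (u - v : ℝ)) - 1) := by
    rw [mul_sub, ← Complex.exp_add, mul_one]
    push_cast
    ring_nf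
  have hdist : dist (Circle.exp u) (Circle.exp v) = ‖(Circle.exp u : ℂ) - Circle.exp v‖ :=
    dist_eq_norm (Circle.exp u : ℂ) (Circle.exp v)
  rw [hdist, Circle.coe_exp, Circle.coe_exp, hfactor, norm_mul,
    Complex.norm_exp_ofReal_mul_I, one_mul, Complex.norm_exp_I_mul_ofReal_sub_one, norm_eq_abs,
    abs_mul, abs_two, chordLen_eq_two_mul_abs_sin]

theorem chordLen_self (u : ℝ) : chordLen u u = 0 := by
  rw [chordLen_eq_dist, dist_self]

theorem chordLen_comm (u v : ℝ) : chordLen u v = chordLen v u := by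
  rw [chordLen_eq_dist, chordLen_eq_dist, dist_comm]

theorem chordLen_nonneg (u v : ℝ) : 0 ≤ chordLen u v := by
  rw [chordLen_eq_dist]
  positivity

theorem chordLen_triangle (u v w : ℝ) : chordLen u w ≤ chordLen u v + chordLen v w := by
  simp only [chordLen_eq_dist]
  exact dist_triangle _ _ _

theorem chordLen_le_arcDist (u v : ℝ) : chordLen u v ≤ arcDist u v := by
  have := sin_le (x := arcDist u v / 2) (by linarith [arcDist_nonneg u v])
  rw [chordLen]
  linarith

theorem abs_sub_lt_of_chordLen_le {u v h : ℝ} (hh : 0 < h) (huv : |u - v| ≤ π)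
    (hchord : chordLen u v ≤ h / 2) : |u - v| < h := by
  have hhalf : |(u - v) / 2| = |u - v| / 2 := by rw [abs_div, abs_two]
  have hjordan : 2 / π * |(u - v) / 2| ≤ |sin ((u - v) / 2)| :=
    mul_abs_le_abs_sin (by linarith)
  have hpi : 1 / 2 < 2 / π := by
    rw [div_lt_div_iff₀ two_pos pi_pos]
    linarith [pi_lt_four]
  rw [chordLen_eq_two_mul_abs_sin] at hchord
  nlinarith [abs_nonneg (u - v)]

theorem two_mul_cos_half_le {x : ℝ} (hx : |x| ≤ π) : 2 * cos (x / 2) ≤ 2 - x ^ 2 / 10 := by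
  have hcos := cos_le_one_sub_mul_cos_sq (x := x / 2) (by
    rw [abs_div, abs_two]
    linarith [abs_nonneg x])
  have hpi : 1 / 5 ≤ 2 / π ^ 2 := by
    rw [div_le_div_iff₀ (by norm_num) (by positivity)]
    nlinarith [pi_pos, pi_lt_d2]
  nlinarith [sq_nonneg x]

theorem chordLen_le_two_sub (u v : ℝ) : chordLen u v ≤ 2 - (π - arcDist u v) ^ 2 / 10 := by
  have hcos := two_mul_cos_half_le (x := π - arcDist u v) (by
    rw [abs_le]
    constructor <;> linarith [arcDist_nonneg u v, arcDist_le_pi u v])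
  have hcompl : (π - arcDist u v) / 2 = π / 2 - arcDist u v / 2 := by ring
  rwa [hcompl, cos_pi_div_two_sub] at hcos

-- The law of cosines for the triangle `p c q`: its angle at `c` is inscribed, hence has cosine
-- `± cos ((p - q) / 2)`.
theorem chordLen_sq_le (p c q : ℝ) :
    chordLen p q ^ 2 ≤ chordLen p c ^ 2 + chordLen c q ^ 2 +
      2 * chordLen p c * chordLen c q * |cos ((p - q) / 2)| := by
  have hsum : (p - q) / 2 = (p - c) / 2 + (c - q) / 2 := by ring
  simp only [chordLen_eq_two_mul_abs_sin, hsum]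
  generalize (p - c) / 2 = α
  generalize (c - q) / 2 = β
  have hcosines : sin (α + β) ^ 2 =
      sin α ^ 2 + sin β ^ 2 + 2 * (sin α * sin β * cos (α + β)) := by
    rw [sin_add, cos_add]
    linear_combination sin β ^ 2 * sin_sq_add_cos_sq α + sin α ^ 2 * sin_sq_add_cos_sq β
  have habs := le_abs_self (sin α * sin β * cos (α + β))
  rw [abs_mul, abs_mul] at habs
  simp only [mul_pow, sq_abs]
  linarith

theorem chordLen_sq_add_sq (p q : ℝ) : chordLen p q ^ 2 + (2 * |cos ((p - q) / 2)|) ^ 2 = 4 := by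
  rw [chordLen_eq_two_mul_abs_sin, mul_pow, mul_pow, sq_abs, sq_abs]
  linear_combination 4 * sin_sq_add_cos_sq ((p - q) / 2)

/-! ### Shortest paths and the diameter -/

theorem chordLen_le_walkCost (p q : ℝ) (L : List (ℝ × ℝ)) : chordLen p q ≤ walkCost q p L := by
  induction L generalizing p with
  | nil => exact chordLen_le_arcDist p q
  | cons e L ih =>
    calc chordLen p q ≤ chordLen p e.1 + chordLen e.1 q := chordLen_triangle _ _ _
      _ ≤ chordLen p e.1 + (chordLen e.1 e.2 + chordLen e.2 q) := by
        gcongr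
        exact chordLen_triangle _ _ _
      _ ≤ arcDist p e.1 + (chordLen e.1 e.2 + walkCost q e.2 L) := by
        gcongr
        exacts [chordLen_le_arcDist p e.1, ih e.2]
      _ = walkCost q p (e :: L) := by
        rw [walkCost]
        ring

theorem walkCost_nonneg (p q : ℝ) (L : List (ℝ × ℝ)) : 0 ≤ walkCost q p L :=
  (chordLen_nonneg p q).trans (chordLen_le_walkCost p q L)

theorem dS_le_walkCost {S : Finset (ℝ × ℝ)} (p q : ℝ) {L : List (ℝ × ℝ)}
    (hL : ∀ e ∈ L, e ∈ S ∨ (e.2, e.1) ∈ S) : dS S p q ≤ walkCost q p L :=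
  csInf_le ⟨0, by rintro _ ⟨L, -, rfl⟩; exact walkCost_nonneg p q L⟩ ⟨L, hL, rfl⟩

theorem dS_le_arcDist (S : Finset (ℝ × ℝ)) (p q : ℝ) : dS S p q ≤ arcDist p q :=
  dS_le_walkCost p q (L := []) (by simp)

theorem dS_le_of_mem {S : Finset (ℝ × ℝ)} {e : ℝ × ℝ} (he : e ∈ S) (p q : ℝ) :
    dS S p q ≤ arcDist p e.1 + chordLen e.1 e.2 + arcDist e.2 q :=
  dS_le_walkCost p q (L := [e]) (by simp [he])

theorem dS_nonneg (S : Finset (ℝ × ℝ)) (p q : ℝ) : 0 ≤ dS S p q :=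
  Real.sInf_nonneg (by rintro _ ⟨L, -, rfl⟩; exact walkCost_nonneg p q L)

theorem exists_walkCost_lt_of_dS_lt {S : Finset (ℝ × ℝ)} {p q b : ℝ} (h : dS S p q < b) :
    ∃ L : List (ℝ × ℝ), (∀ e ∈ L, e ∈ S ∨ (e.2, e.1) ∈ S) ∧ walkCost q p L < b := by
  have hne : {c | ∃ L : List (ℝ × ℝ), (∀ e ∈ L, e ∈ S ∨ (e.2, e.1) ∈ S) ∧
      c = walkCost q p L}.Nonempty := ⟨walkCost q p [], [], by simp, rfl⟩
  obtain ⟨_, ⟨L, hL, rfl⟩, hlt⟩ := exists_lt_of_csInf_lt hne h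
  exact ⟨L, hL, hlt⟩

theorem dS_anti {S T : Finset (ℝ × ℝ)} (hST : S ⊆ T) (p q : ℝ) : dS T p q ≤ dS S p q := by
  refine le_of_forall_gt fun b hb => ?_
  obtain ⟨L, hL, hlt⟩ := exists_walkCost_lt_of_dS_lt hb
  exact (dS_le_walkCost p q fun e he => (hL e he).imp (@hST _) (@hST _)).trans_lt hlt

theorem dS_le_diamS (S : Finset (ℝ × ℝ)) (p q : ℝ) : dS S p q ≤ diamS S :=
  le_csSup ⟨π, by rintro _ ⟨p, q, rfl⟩; exact (dS_le_arcDist S p q).trans (arcDist_le_pi p q)⟩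
    ⟨p, q, rfl⟩

theorem diamS_le {S : Finset (ℝ × ℝ)} {b : ℝ} (h : ∀ p q, dS S p q ≤ b) : diamS S ≤ b :=
  csSup_le ⟨dS S 0 0, 0, 0, rfl⟩ (by rintro _ ⟨p, q, rfl⟩; exact h p q)

theorem diamS_nonneg (S : Finset (ℝ × ℝ)) : 0 ≤ diamS S :=
  (dS_nonneg S 0 0).trans (dS_le_diamS S 0 0)

theorem diamS_anti {S T : Finset (ℝ × ℝ)} (hST : S ⊆ T) : diamS T ≤ diamS S :=
  diamS_le fun p q => (dS_anti hST p q).trans (dS_le_diamS S p q)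

/-! ### Chords close to a diameter -/

/-- The chord from `p` whose arc falls short of a half-circle by `x`, the *defect* of the chord. -/
noncomputable def nearDiameter (p x : ℝ) : ℝ × ℝ := (p, p + π - x)

theorem chordLen_nearDiameter (p x : ℝ) :
    chordLen (nearDiameter p x).1 (nearDiameter p x).2 = 2 * |cos (x / 2)| := by
  have hcompl : (p - (p + π - x)) / 2 = -(π / 2 - x / 2) := by ring
  rw [nearDiameter, chordLen_eq_two_mul_abs_sin, hcompl, sin_neg, abs_neg, sin_pi_div_two_sub]

theorem cos_half_pos {x : ℝ} (hx : |x| < π) : 0 < cos (x / 2) := by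
  rw [abs_lt] at hx
  exact cos_pos_of_mem_Ioo ⟨by linarith, by linarith⟩

theorem isShortcut_nearDiameter (p : ℝ) {x : ℝ} (hx : |x| < π) :
    IsShortcut (nearDiameter p x) := by
  intro hzero
  have hlen := chordLen_nearDiameter p x
  rw [chordLen, hzero, zero_div, sin_zero, mul_zero, abs_of_pos (cos_half_pos hx)] at hlen
  linarith [cos_half_pos hx]

theorem two_sub_sq_div_four_le_chordLen_nearDiameter (p x : ℝ) :
    2 - x ^ 2 / 4 ≤ chordLen (nearDiameter p x).1 (nearDiameter p x).2 := by
  rw [chordLen_nearDiameter]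
  linarith [one_sub_sq_div_two_le_cos (x := x / 2), le_abs_self (cos (x / 2))]

theorem chordLen_nearDiameter_le {p x : ℝ} (hx : |x| < π) :
    chordLen (nearDiameter p x).1 (nearDiameter p x).2 ≤ 2 - x ^ 2 / 10 := by
  rw [chordLen_nearDiameter, abs_of_pos (cos_half_pos hx)]
  exact two_mul_cos_half_le hx.le

theorem infinite_setOf_isShortcut : {s | IsShortcut s}.Infinite :=
  Set.infinite_of_injective_forall_mem (f := fun n : ℕ => nearDiameter n 0)
    (fun m n h => Nat.cast_injective (congrArg Prod.fst h))
    (fun n => isShortcut_nearDiameter n (by simpa using pi_pos))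

theorem le_diamK {k : ℕ} {b : ℝ} (h : ∀ S : Finset (ℝ × ℝ), S.card = k → b ≤ diamS S) :
    b ≤ diamK k := by
  obtain ⟨T, hT, hTcard⟩ := infinite_setOf_isShortcut.exists_subset_card_eq k
  refine le_csInf ⟨diamS T, T, hTcard, fun s hs => hT hs, rfl⟩ ?_
  rintro _ ⟨S, hS, -, rfl⟩
  exact h S hS

theorem diamK_le_diamS {S : Finset (ℝ × ℝ)} (hS : ∀ s ∈ S, IsShortcut s) {k : ℕ}
    (hk : S.card ≤ k) : diamK k ≤ diamS S := by
  obtain ⟨T, hT, hTcard⟩ :=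
    (infinite_setOf_isShortcut.sdiff S.finite_toSet).exists_subset_card_eq (k - S.card)
  have hdisj : Disjoint S T := Finset.disjoint_right.2 fun s hs => (hT hs).2
  have hcard : (S ∪ T).card = k := by
    rw [Finset.card_union_of_disjoint hdisj]
    omega
  have hshort : ∀ s ∈ S ∪ T, IsShortcut s := fun s hs =>
    (Finset.mem_union.1 hs).elim (hS s) fun hsT => (hT hsT).1
  calc diamK k ≤ diamS (S ∪ T) :=
        csInf_le ⟨0, by rintro _ ⟨S, -, -, rfl⟩; exact diamS_nonneg S⟩ ⟨_, hcard, hshort, rfl⟩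
    _ ≤ diamS S := diamS_anti Finset.subset_union_left

/-! ### The lower bound -/

theorem chordLen_le_or_chordLen_le {p c q ε : ℝ} (hε : ε ≤ 1 / 1000)
    (hpq : 2 - ε ≤ chordLen p q) (hc : chordLen p c + chordLen c q < 2 + ε) :
    chordLen p c ≤ 9 * ε ∨ chordLen c q ≤ 9 * ε := by
  have htri := chordLen_triangle p c q
  have hlaw := chordLen_sq_le p c q
  have hpyth := chordLen_sq_add_sq p q
  have ha := chordLen_nonneg p c
  have hb := chordLen_nonneg c q
  have ht := abs_nonneg (cos ((p - q) / 2))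
  generalize chordLen p c = a at *
  generalize chordLen c q = b at *
  generalize chordLen p q = s at *
  generalize |cos ((p - q) / 2)| = t at *
  have hcos : t ≤ 1 / 2 := by nlinarith
  have hprod : a * b ≤ 8 * ε := by
    have : a * b * t ≤ a * b * (1 / 2) := by gcongr
    nlinarith
  rcases le_total a b with hab | hab
  · left
    have hlong : 8 / 9 ≤ b := by linarith
    nlinarith [hlong]
  · right
    have hlong : 8 / 9 ≤ a := by linarith
    nlinarith [hlong]

theorem two_add_lt_arcDist {p q u v ε : ℝ} (hε : ε ≤ 1 / 1000) (hpq : 2 - ε ≤ chordLen p q)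
    (hu : chordLen p u ≤ 9 * ε) (hv : chordLen v q ≤ 9 * ε) : 2 + ε < arcDist u v := by
  have hfar : 2 - 19 * ε ≤ chordLen u v := by
    linarith [chordLen_triangle p u q, chordLen_triangle u v q]
  have hdefect : (π - arcDist u v) ^ 2 ≤ 1 / 5 := by linarith [chordLen_le_two_sub u v]
  nlinarith [pi_gt_three]

theorem exists_mem_near_of_walkCost_lt {p q ε : ℝ} (hε0 : 0 ≤ ε) (hε : ε ≤ 1 / 1000)
    (hpq : 2 - ε ≤ chordLen p q) (L : List (ℝ × ℝ)) {c : ℝ} (hc : chordLen p c ≤ 9 * ε)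
    (hL : chordLen p c + walkCost q c L < 2 + ε) :
    ∃ e ∈ L, chordLen p e.1 ≤ 9 * ε ∧ chordLen e.2 q ≤ 9 * ε := by
  induction L generalizing c with
  | nil =>
    have hbridge := two_add_lt_arcDist hε hpq hc (by rw [chordLen_self q]; positivity)
    rw [walkCost] at hL
    linarith [chordLen_nonneg p c]
  | cons e L ih =>
    rw [walkCost] at hL
    have harc := chordLen_le_arcDist c e.1
    have hrest := chordLen_le_walkCost e.2 q L
    have htri₁ := chordLen_triangle p c e.1
    have htri₂ := chordLen_triangle p e.1 e.2
    have htri₃ := chordLen_triangle e.1 e.2 q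
    have hfst : chordLen p e.1 ≤ 9 * ε := by
      refine (chordLen_le_or_chordLen_le hε hpq (by linarith)).resolve_right fun he => ?_
      linarith [two_add_lt_arcDist hε hpq hc he, chordLen_nonneg p c, chordLen_nonneg e.1 e.2,
        chordLen_nonneg e.2 q]
    rcases chordLen_le_or_chordLen_le hε hpq (c := e.2) (by linarith) with hsnd | hsnd
    · obtain ⟨e', he', hnear⟩ := ih hsnd (by linarith)
      exact ⟨e', List.mem_cons_of_mem e he', hnear⟩
    · exact ⟨e, List.mem_cons_self, hfst, hsnd⟩

theorem exists_shortcut_near_of_diamS_lt {S : Finset (ℝ × ℝ)} {p q ε : ℝ} (hε0 : 0 < ε)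
    (hε : ε ≤ 1 / 1000) (hS : diamS S < 2 + ε) (hpq : 2 - ε ≤ chordLen p q) :
    ∃ e ∈ S ∪ S.image Prod.swap, chordLen p e.1 ≤ 9 * ε ∧ chordLen e.2 q ≤ 9 * ε := by
  obtain ⟨L, hL, hlt⟩ := exists_walkCost_lt_of_dS_lt ((dS_le_diamS S p q).trans_lt hS)
  have hself := chordLen_self p
  obtain ⟨e, he, hnear⟩ :=
    exists_mem_near_of_walkCost_lt hε0.le hε hpq L (by rw [hself]; positivity)
      (by rwa [hself, zero_add])
  refine ⟨e, ?_, hnear⟩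
  rw [Finset.mem_union, Finset.mem_image]
  exact (hL e he).imp_right fun hswap => ⟨_, hswap, rfl⟩

theorem eq_of_chordLen_le {h u v : ℝ} {i j : ℕ} (hh : 0 < h) (huv : |u - v| = |(i - j : ℝ)| * h)
    (hpi : |u - v| ≤ π) (hchord : chordLen u v ≤ h / 2) : i = j := by
  have hlt := abs_sub_lt_of_chordLen_le hh hpi hchord
  by_contra hne
  have hdist : 1 ≤ |(i - j : ℝ)| := Nat.pairwise_one_le_dist hne
  nlinarith

theorem abs_sub_mul_le {h b : ℝ} {i j N : ℕ} (hh : 0 ≤ h) (hN : N * h ≤ b) (hi : i < N)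
    (hj : j < N) : |(i - j : ℝ)| * h ≤ b := by
  refine le_trans ?_ hN
  gcongr
  have hi' : (i : ℝ) ≤ N := by exact_mod_cast hi.le
  have hj' : (j : ℝ) ≤ N := by exact_mod_cast hj.le
  exact abs_sub_le_of_nonneg_of_le i.cast_nonneg hi' j.cast_nonneg hj'

theorem eq_of_nearDiameter_near {h : ℝ} (hh : 0 < h) {M N : ℕ} (hM : M * h ≤ π) (hN : N * h ≤ π)
    {n n' : ℕ × ℕ} (hn : n ∈ Finset.range M ×ˢ Finset.range N)
    (hn' : n' ∈ Finset.range M ×ˢ Finset.range N) {e : ℝ × ℝ}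
    (hfst : chordLen (nearDiameter (n.1 * h) (n.2 * h)).1 e.1 ≤ h / 4)
    (hsnd : chordLen e.2 (nearDiameter (n.1 * h) (n.2 * h)).2 ≤ h / 4)
    (hfst' : chordLen (nearDiameter (n'.1 * h) (n'.2 * h)).1 e.1 ≤ h / 4)
    (hsnd' : chordLen e.2 (nearDiameter (n'.1 * h) (n'.2 * h)).2 ≤ h / 4) : n = n' := by
  obtain ⟨i, j⟩ := n
  obtain ⟨i', j'⟩ := n'
  simp only [Finset.mem_product, Finset.mem_range] at hn hn'
  simp only [nearDiameter] at hfst hsnd hfst' hsnd'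
  rw [chordLen_comm] at hfst' hsnd
  have hstart : chordLen (i * h) (i' * h) ≤ h / 2 := by
    linarith [chordLen_triangle (i * h) e.1 (i' * h)]
  have hend : chordLen (i * h + π - j * h) (i' * h + π - j' * h) ≤ h / 2 := by
    linarith [chordLen_triangle (i * h + π - j * h) e.2 (i' * h + π - j' * h)]
  have hi : |i * h - i' * h| = |(i - i' : ℝ)| * h := by
    rw [← sub_mul, abs_mul, abs_of_pos hh]
  obtain rfl : i = i' :=
    eq_of_chordLen_le hh hi (hi ▸ abs_sub_mul_le hh.le hM hn.1 hn'.1) hstart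
  have hj : |i * h + π - j * h - (i * h + π - j' * h)| = |(j - j' : ℝ)| * h := by
    rw [sub_sub_sub_cancel_left, ← sub_mul, abs_mul, abs_of_pos hh, abs_sub_comm]
  obtain rfl : j = j' :=
    eq_of_chordLen_le hh hj (hj ▸ abs_sub_mul_le hh.le hN hn.2 hn'.2) hend
  rfl

theorem mul_le_two_mul_card_of_diamS_lt {S : Finset (ℝ × ℝ)} {ε : ℝ} (hε0 : 0 < ε)
    (hε : ε ≤ 1 / 1000) (hS : diamS S < 2 + ε) {M N : ℕ} (hM : M * (36 * ε) ≤ π)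
    (hN : (N * (36 * ε)) ^ 2 ≤ 4 * ε) : M * N ≤ 2 * S.card := by
  obtain ⟨h, hh⟩ : ∃ h, h = 36 * ε := ⟨_, rfl⟩
  rw [← hh] at hM hN
  have hquarter : 9 * ε = h / 4 := by linarith
  have hNpi : N * h ≤ π := by nlinarith [pi_gt_three]
  have hnear : ∀ n ∈ Finset.range M ×ˢ Finset.range N, ∃ e ∈ S ∪ S.image Prod.swap,
      chordLen (nearDiameter (n.1 * h) (n.2 * h)).1 e.1 ≤ h / 4 ∧
        chordLen e.2 (nearDiameter (n.1 * h) (n.2 * h)).2 ≤ h / 4 := by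
    intro n hn
    have hn2 : n.2 ≤ N := (Finset.mem_range.1 (Finset.mem_product.1 hn).2).le
    have hdefect : (n.2 * h) ^ 2 ≤ (N * h) ^ 2 := by
      have hh0 : 0 ≤ h := by linarith
      gcongr
    rw [← hquarter]
    refine exists_shortcut_near_of_diamS_lt hε0 hε hS ?_
    linarith [two_sub_sq_div_four_le_chordLen_nearDiameter (n.1 * h) (n.2 * h)]
  choose! f hfmem hffst hfsnd using hnear
  have hinj : Set.InjOn f (Finset.range M ×ˢ Finset.range N : Finset (ℕ × ℕ)) :=
    fun n hn n' hn' hf => eq_of_nearDiameter_near (by linarith) hM hNpi hn hn' (hffst n hn)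
      (hfsnd n hn) (hf ▸ hffst n' hn') (hf ▸ hfsnd n' hn')
  calc M * N = (Finset.range M ×ˢ Finset.range N).card := by
        rw [Finset.card_product, Finset.card_range, Finset.card_range]
    _ ≤ (S ∪ S.image Prod.swap).card := Finset.card_le_card_of_injOn f hfmem hinj
    _ ≤ S.card + (S.image Prod.swap).card := Finset.card_union_le _ _
    _ ≤ 2 * S.card := by linarith [Finset.card_image_le (s := S) (f := Prod.swap)]

theorem exists_cube_root {x : ℝ} (hx : 1 ≤ x) :
    ∃ r : ℝ, 1 ≤ r ∧ r ^ 3 = x ∧ x ^ (-(2 : ℝ) / 3) = 1 / r ^ 2 := by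
  have hx0 : 0 ≤ x := zero_le_one.trans hx
  refine ⟨x ^ ((1 : ℝ) / 3), one_le_rpow hx (by norm_num), ?_, ?_⟩
  · rw [← rpow_natCast, ← rpow_mul hx0]
    norm_num
  · rw [← rpow_natCast, ← rpow_mul hx0, one_div, ← rpow_neg hx0]
    norm_num

theorem two_add_le_diamK {k : ℕ} (hk : 1 ≤ k) :
    2 + 1 / 1296 * (k : ℝ) ^ (-(2 : ℝ) / 3) ≤ diamK k := by
  obtain ⟨r, hr1, hrk, hpow⟩ := exists_cube_root (Nat.one_le_cast.2 hk)
  rw [hpow]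
  refine le_diamK fun S hS => ?_
  by_contra! hlt
  set ε := 1 / 1296 * (1 / r ^ 2) with hε
  have hr2 : 1 ≤ r ^ 2 := one_le_pow₀ hr1
  have hεr : ε * r ^ 2 = 1 / 1296 := by rw [hε]; field_simp
  have hε0 : 0 < ε := by positivity
  set M := ⌈3 * r ^ 2⌉₊
  set N := ⌈r⌉₊
  have hMge : 3 * r ^ 2 ≤ M := Nat.le_ceil _
  have hNge : r ≤ N := Nat.le_ceil _
  have hMle : (M : ℝ) ≤ 4 * r ^ 2 := by
    linarith [Nat.ceil_lt_add_one (a := 3 * r ^ 2) (by positivity)]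
  have hNle : (N : ℝ) ≤ 2 * r := by linarith [Nat.ceil_lt_add_one (a := r) (by positivity)]
  have hcount : M * N ≤ 2 * S.card := by
    refine mul_le_two_mul_card_of_diamS_lt hε0 (by nlinarith) hlt ?_ ?_
    · calc M * (36 * ε) ≤ 4 * r ^ 2 * (36 * ε) := by gcongr
        _ ≤ π := by linarith [pi_gt_three]
    · calc (N * (36 * ε)) ^ 2 ≤ (2 * r * (36 * ε)) ^ 2 := by gcongr
        _ = 4 * ε := by linear_combination 5184 * ε * hεr
  have hcount' : (M * N : ℝ) ≤ 2 * r ^ 3 := by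
    rw [hrk, ← hS]
    exact_mod_cast hcount
  have hmany : 3 * r ^ 2 * r ≤ M * N := by gcongr
  nlinarith [pow_pos (zero_lt_one.trans_le hr1) 3]

/-! ### The upper bound -/

/-- The near-diameters whose starting angles are the multiples `i * h` with `|i| ≤ M` and whose
defects are the multiples `j * h` with `|j| ≤ N`. -/
noncomputable def chordNet (h : ℝ) (M N : ℕ) : Finset (ℝ × ℝ) :=
  (Finset.Icc (-M : ℤ) M ×ˢ Finset.Icc (-N : ℤ) N).image fun n => nearDiameter (n.1 * h) (n.2 * h)

theorem card_chordNet_le (h : ℝ) (M N : ℕ) :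
    (chordNet h M N).card ≤ (2 * M + 1) * (2 * N + 1) := by
  refine Finset.card_image_le.trans_eq ?_
  rw [Finset.card_product, Int.card_Icc, Int.card_Icc]
  congr 1 <;> omega

theorem isShortcut_of_mem_chordNet {h : ℝ} {M N : ℕ} (hh : 0 ≤ h) (hN : N * h < π) {s : ℝ × ℝ}
    (hs : s ∈ chordNet h M N) : IsShortcut s := by
  obtain ⟨⟨i, j⟩, hij, rfl⟩ := Finset.mem_image.1 hs
  have hj : |(j : ℝ)| ≤ N := by
    have := Finset.mem_Icc.1 (Finset.mem_product.1 hij).2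
    rw [abs_le]
    exact_mod_cast this
  refine isShortcut_nearDiameter _ (lt_of_le_of_lt ?_ hN)
  rw [abs_mul, abs_of_nonneg hh]
  gcongr

theorem exists_int_mul_near {h x : ℝ} {N : ℕ} (hh : 0 < h) (hx : |x| ≤ N * h) :
    ∃ i ∈ Finset.Icc (-N : ℤ) N, |x - i * h| ≤ h := by
  obtain ⟨hlow, hup⟩ := abs_le.1 hx
  refine ⟨⌊x / h⌋, Finset.mem_Icc.2 ⟨?_, ?_⟩, ?_⟩
  · rw [Int.le_floor, le_div_iff₀ hh]
    push_cast
    linarith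
  · have hfloor : (⌊x / h⌋ : ℝ) ≤ N := (Int.floor_le _).trans ((div_le_iff₀ hh).2 hup)
    exact_mod_cast hfloor
  · have hfloor := (le_div_iff₀ hh).1 (Int.floor_le (x / h))
    have hceil := (div_lt_iff₀ hh).1 (Int.lt_floor_add_one (x / h))
    rw [abs_le]
    constructor <;> linarith

theorem exists_mem_chordNet_near {h : ℝ} {M N : ℕ} (hh : 0 < h) (hM : π ≤ M * h) (p : ℝ) {x : ℝ}
    (hx : |x| ≤ N * h) (n : ℤ) :
    ∃ a y, nearDiameter a y ∈ chordNet h M N ∧ |x - y| ≤ h ∧ arcDist p a ≤ h ∧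
      arcDist (nearDiameter a y).2 (p + π - x + 2 * π * n) ≤ 2 * h := by
  obtain ⟨k, hk⟩ := exists_abs_add_two_pi_mul_le_pi p
  obtain ⟨i, hi, hpi⟩ := exists_int_mul_near hh (hk.trans hM)
  obtain ⟨j, hj, hxj⟩ := exists_int_mul_near hh hx
  refine ⟨i * h, j * h, Finset.mem_image.2 ⟨(i, j), Finset.mk_mem_product hi hj, rfl⟩, hxj, ?_, ?_⟩
  · refine (arcDist_le _ _ k).trans ?_
    rwa [sub_add_eq_add_sub]
  · refine (arcDist_le _ _ (n - k)).trans ?_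
    rw [abs_le] at *
    simp only [nearDiameter]
    push_cast
    constructor <;> linarith

theorem exists_dyadic_scale {x : ℝ} (hx : x ≤ 2) (J : ℕ) :
    ∃ m ≤ J, x ≤ 2 * (1 / 2) ^ m ∧ (m = J ∨ (1 / 2) ^ m ≤ x) := by
  induction J with
  | zero => exact ⟨0, le_rfl, by simpa using hx, Or.inl rfl⟩
  | succ J ih =>
    obtain ⟨m, hm, hxm, rfl | hlow⟩ := ih
    · rcases le_total ((1 / 2) ^ m) x with hlow | hup
      · exact ⟨m, m.le_succ, hxm, Or.inr hlow⟩
      · exact ⟨m + 1, le_rfl, by rw [pow_succ]; linarith, Or.inl rfl⟩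
    · exact ⟨m, hm.trans J.le_succ, hxm, Or.inr hlow⟩

/-- The mesh width used at defects of order `2⁻ᵐ`: at most a third of the saving, of order `4⁻ᵐ`,
that such a defect yields over a diameter. -/
noncomputable def meshWidth (m : ℕ) : ℝ := (1 / 2) ^ m * (1 / 2) ^ m / 40

/-- The net of chords serving the pairs of points with defect at most `2 * 2⁻ᵐ`. -/
noncomputable def levelNet (m : ℕ) : Finset (ℝ × ℝ) :=
  chordNet (meshWidth m) (160 * 4 ^ m) (80 * 2 ^ m)

theorem meshWidth_pos (m : ℕ) : 0 < meshWidth m := by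
  unfold meshWidth
  positivity

theorem defectRange_mul_meshWidth (m : ℕ) :
    ((80 * 2 ^ m : ℕ) : ℝ) * meshWidth m = 2 * (1 / 2) ^ m := by
  unfold meshWidth
  push_cast
  rw [one_div, inv_pow]
  field_simp
  norm_num

theorem angleRange_mul_meshWidth (m : ℕ) : ((160 * 4 ^ m : ℕ) : ℝ) * meshWidth m = 4 := by
  have hfour : (4 : ℝ) ^ m = 2 ^ m * 2 ^ m := by rw [← mul_pow]; norm_num
  unfold meshWidth
  push_cast
  rw [one_div, inv_pow, hfour]
  field_simp
  norm_num

theorem card_levelNet_le (m : ℕ) : (levelNet m).card ≤ 51681 * 8 ^ m := by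
  have h4 : 1 ≤ 4 ^ m := Nat.one_le_pow _ _ (by norm_num)
  have h2 : 1 ≤ 2 ^ m := Nat.one_le_pow _ _ (by norm_num)
  calc (levelNet m).card ≤ (2 * (160 * 4 ^ m) + 1) * (2 * (80 * 2 ^ m) + 1) :=
        card_chordNet_le _ _ _
    _ ≤ (321 * 4 ^ m) * (161 * 2 ^ m) := by gcongr <;> omega
    _ = 51681 * (4 * 2) ^ m := by rw [mul_pow]; ring
    _ = 51681 * 8 ^ m := by norm_num

theorem isShortcut_of_mem_levelNet {m : ℕ} {s : ℝ × ℝ} (hs : s ∈ levelNet m) : IsShortcut s := by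
  refine isShortcut_of_mem_chordNet (meshWidth_pos m).le ?_ hs
  rw [defectRange_mul_meshWidth]
  linarith [pow_le_one₀ (n := m) (by norm_num : (0 : ℝ) ≤ 1 / 2) (by norm_num), pi_gt_three]

theorem chordLen_nearDiameter_add_le {a x y : ℝ} {m J : ℕ} (hx : |x| ≤ 2)
    (hm : m = J ∨ (1 / 2) ^ m ≤ |x|) (hxy : |x - y| ≤ meshWidth m) :
    chordLen (nearDiameter a y).1 (nearDiameter a y).2 + 3 * meshWidth m ≤ 2 + (1 / 4) ^ J := by
  have hr0 : (0 : ℝ) < (1 / 2) ^ m := by positivity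
  have hr1 : ((1 : ℝ) / 2) ^ m ≤ 1 := pow_le_one₀ (by norm_num) (by norm_num)
  have hmesh : meshWidth m ≤ (1 / 2) ^ m / 40 := by
    unfold meshWidth
    nlinarith
  have hy : |y| < π := by
    linarith [abs_sub_abs_le_abs_sub y x, abs_sub_comm x y, pi_gt_three]
  have hchord := chordLen_nearDiameter_le (p := a) hy
  rcases hm with rfl | hlow
  · have hsq : ((1 : ℝ) / 4) ^ m = (1 / 2) ^ m * (1 / 2) ^ m := by rw [← mul_pow]; norm_num
    rw [hsq, meshWidth]
    nlinarith [sq_nonneg y]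
  · have hylow : 39 / 40 * (1 / 2) ^ m ≤ |y| := by linarith [abs_sub_abs_le_abs_sub x y]
    have hsaving : (39 / 40 * (1 / 2) ^ m) ^ 2 ≤ y ^ 2 := by
      rw [← sq_abs y]
      gcongr
    have hJ : (0 : ℝ) < (1 / 4) ^ J := by positivity
    rw [meshWidth]
    nlinarith

theorem exists_mem_levelNet_cost_le (J : ℕ) (p : ℝ) {x : ℝ} (hx : |x| ≤ 2) (n : ℤ) :
    ∃ m ≤ J, ∃ e ∈ levelNet m,
      arcDist p e.1 + chordLen e.1 e.2 + arcDist e.2 (p + π - x + 2 * π * n) ≤ 2 + (1 / 4) ^ J := by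
  obtain ⟨m, hmJ, hxm, hm⟩ := exists_dyadic_scale hx J
  rw [← defectRange_mul_meshWidth] at hxm
  obtain ⟨a, y, hmem, hxy, hstart, hend⟩ := exists_mem_chordNet_near (meshWidth_pos m)
    (pi_lt_four.le.trans_eq (angleRange_mul_meshWidth m).symm) p hxm n
  refine ⟨m, hmJ, nearDiameter a y, hmem, ?_⟩
  have hcost := chordLen_nearDiameter_add_le (a := a) hx hm hxy
  have hstart' : arcDist p (nearDiameter a y).1 ≤ meshWidth m := hstart
  linarith

/-- The shortcuts realizing the upper bound: the nets of all scales from `1` down to `2⁻ᴶ`. -/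
noncomputable def multiscaleNet (J : ℕ) : Finset (ℝ × ℝ) :=
  (Finset.range (J + 1)).biUnion levelNet

theorem isShortcut_of_mem_multiscaleNet {J : ℕ} {s : ℝ × ℝ} (hs : s ∈ multiscaleNet J) :
    IsShortcut s := by
  obtain ⟨m, -, hm⟩ := Finset.mem_biUnion.1 hs
  exact isShortcut_of_mem_levelNet hm

theorem card_multiscaleNet_le (J : ℕ) : (multiscaleNet J).card ≤ 64000 * 8 ^ J := by
  have hgeom : (∑ m ∈ Finset.range (J + 1), 8 ^ m) * 7 + 1 = 8 ^ (J + 1) :=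
    geom_sum_mul_add 7 (J + 1)
  rw [pow_succ] at hgeom
  calc (multiscaleNet J).card ≤ ∑ m ∈ Finset.range (J + 1), 51681 * 8 ^ m :=
        Finset.card_biUnion_le.trans (Finset.sum_le_sum fun m _ => card_levelNet_le m)
    _ = 51681 * ∑ m ∈ Finset.range (J + 1), 8 ^ m := (Finset.mul_sum _ _ _).symm
    _ ≤ 64000 * 8 ^ J := by omega

theorem diamS_multiscaleNet_le (J : ℕ) : diamS (multiscaleNet J) ≤ 2 + (1 / 4) ^ J := by
  refine diamS_le fun p q => ?_
  obtain ⟨n, hn⟩ := exists_abs_add_two_pi_mul_le_pi (p + π - q)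
  set x := p + π - q + 2 * π * n with hx
  have hq : q = p + π - x + 2 * π * n := by rw [hx]; ring
  rcases le_or_gt |x| 2 with hx2 | hx2
  · obtain ⟨m, hm, e, he, hcost⟩ := exists_mem_levelNet_cost_le J p hx2 n
    rw [← hq] at hcost
    have hmem : e ∈ multiscaleNet J :=
      Finset.mem_biUnion.2 ⟨m, Finset.mem_range.2 (Nat.lt_succ_of_le hm), he⟩
    exact (dS_le_of_mem hmem p q).trans hcost
  · have harc : arcDist p q ≤ 2 := by
      rcases lt_abs.1 hx2 with hpos | hneg
      · refine (arcDist_le p q n).trans ?_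
        rw [abs_le] at *
        constructor <;> linarith [pi_lt_four]
      · refine (arcDist_le p q (n + 1)).trans ?_
        rw [abs_le] at *
        push_cast
        constructor <;> linarith [pi_lt_four]
    have hJ : (0 : ℝ) < (1 / 4) ^ J := by positivity
    linarith [dS_le_arcDist (multiscaleNet J) p q]

theorem diamK_le_two_add {k : ℕ} (hk : 64000 ≤ k) :
    diamK k ≤ 2 + 6400 * (k : ℝ) ^ (-(2 : ℝ) / 3) := by
  obtain ⟨r, hr1, hrk, hpow⟩ := exists_cube_root (x := k) (Nat.one_le_cast.2 (by omega))
  have hr40 : 40 ≤ r := by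
    have hcube : (40 : ℝ) ^ 3 ≤ r ^ 3 := by
      rw [hrk]
      exact_mod_cast hk
    exact le_of_pow_le_pow_left₀ three_ne_zero (by positivity) hcube
  obtain ⟨J, hJle, hJlt⟩ := exists_nat_pow_near (x := r / 40) (y := 2) (by linarith) one_lt_two
  have hcard : (multiscaleNet J).card ≤ k := by
    refine (card_multiscaleNet_le J).trans ?_
    have hcube : (64000 * 8 ^ J : ℝ) ≤ k := by
      calc (64000 * 8 ^ J : ℝ) = (40 * 2 ^ J) ^ 3 := by
            rw [mul_pow, ← pow_mul, mul_comm J, pow_mul]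
            norm_num
        _ ≤ r ^ 3 := by gcongr; linarith
        _ = k := hrk
    exact_mod_cast hcube
  have hscale : ((1 : ℝ) / 4) ^ J ≤ 6400 * (1 / r ^ 2) := by
    have hr : r ≤ 80 * 2 ^ J := by rw [pow_succ] at hJlt; linarith
    rw [one_div_pow, mul_one_div, div_le_div_iff₀ (by positivity) (by positivity), one_mul]
    calc r ^ 2 ≤ (80 * 2 ^ J) ^ 2 := by gcongr
      _ = 6400 * 4 ^ J := by
        rw [mul_pow, ← pow_mul, mul_comm J, pow_mul]
        norm_num
  calc diamK k ≤ diamS (multiscaleNet J) :=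
        diamK_le_diamS (fun _ => isShortcut_of_mem_multiscaleNet) hcard
    _ ≤ 2 + (1 / 4) ^ J := diamS_multiscaleNet_le J
    _ ≤ 2 + 6400 * (k : ℝ) ^ (-(2 : ℝ) / 3) := by
      rw [hpow]
      gcongr

/-- asymptotically `diam(k) = 2 + Θ(1/k^{2/3})`. -/
theorem stmt8 :
    ∃ c₁ c₂ : ℝ, 0 < c₁ ∧ 0 < c₂ ∧ ∃ k₀ : ℕ, ∀ k : ℕ, k₀ ≤ k →
      2 + c₁ * (k : ℝ) ^ (-(2 : ℝ) / 3) ≤ diamK k ∧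
      diamK k ≤ 2 + c₂ * (k : ℝ) ^ (-(2 : ℝ) / 3) := by
  refine ⟨1 / 1296, 6400, by norm_num, by norm_num, 64000, fun k hk => ⟨?_, ?_⟩⟩
  · exact two_add_le_diamK (by omega)
  · exact diamK_le_two_add hk
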